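/- Let a,b,c ∈ ℝ be constants, not all zero, and consider the singular scale-invariant plane wave metric on U = {(u,v,y,z) ∈ ℝ⁴ : u > 0} given by the pp-wave metric with 2H = u⁻²(a y² + 2b yz + c z²). Then the vector field X₆ with covariant components (X₆)_a = −2v δ^u_a + y δ^y_a + z δ^z_a satisfies ∇_{(a}(X₆)_{b)} = g_{ab} (it is a homothetic vector field with ψ = 1), and the Koutras Killing tensor L_{ab} = k_{(a}(X₆)_{b)} + u g_{ab}, where k_a = −δ^u_a, is reducible. -/

import Mathlib

noncomputable section

/-- Points of (an open subset of) `ℝ⁴`, with coordinates `(u,v,y,z)` indexed by `0,1,2,3`. -/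
abbrev Pt : Type := Fin 4 → ℝ

/-- Partial derivative of a function in the `i`-th coordinate direction. -/
def pd (i : Fin 4) (f : Pt → ℝ) (p : Pt) : ℝ :=
  fderiv ℝ f p (Pi.single i 1)

/-- Kronecker delta `δ^i_a`. -/
def kd (i a : Fin 4) : ℝ := if i = a then 1 else 0

/-- Symmetrized product of Kronecker deltas, `δ_{(a}^i δ_{b)}^j`. -/
def sd (i j a b : Fin 4) : ℝ := (kd i a * kd j b + kd j a * kd i b) / 2

/-- Components of the pp-wave metric `g = -2 du dv - 2H du² + dy² + dz²`. -/
def ppMetric (H : Pt → ℝ) (p : Pt) (a b : Fin 4) : ℝ :=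
  if a = 0 ∧ b = 0 then -2 * H p
  else if (a = 0 ∧ b = 1) ∨ (a = 1 ∧ b = 0) then -1
  else if (a = 2 ∧ b = 2) ∨ (a = 3 ∧ b = 3) then 1
  else 0

/-- Christoffel symbols `Γ^d_{ab}` of the pp-wave metric:
`Γ^v_{uu} = H_{,u}`, `Γ^y_{uu} = Γ^v_{uy} = Γ^v_{yu} = H_{,y}`,
`Γ^z_{uu} = Γ^v_{uz} = Γ^v_{zu} = H_{,z}`, all others zero. -/
def Gamma (H : Pt → ℝ) (p : Pt) (d a b : Fin 4) : ℝ :=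
  if d = 1 ∧ a = 0 ∧ b = 0 then pd 0 H p
  else if (d = 2 ∧ a = 0 ∧ b = 0) ∨ (d = 1 ∧ ((a = 0 ∧ b = 2) ∨ (a = 2 ∧ b = 0))) then pd 2 H p
  else if (d = 3 ∧ a = 0 ∧ b = 0) ∨ (d = 1 ∧ ((a = 0 ∧ b = 3) ∨ (a = 3 ∧ b = 0))) then pd 3 H p
  else 0

/-- Covariant derivative of a covector field: `∇_a X_b = ∂_a X_b - Γ^d_{ab} X_d`. -/
def covD1 (H : Pt → ℝ) (X : Pt → Fin 4 → ℝ) (p : Pt) (a b : Fin 4) : ℝ :=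
  pd a (fun q => X q b) p - ∑ d, Gamma H p d a b * X p d

/-- Covariant derivative of a 2-tensor field:
`∇_c T_{ab} = ∂_c T_{ab} - Γ^d_{ca} T_{db} - Γ^d_{cb} T_{ad}`. -/
def covD2 (H : Pt → ℝ) (T : Pt → Fin 4 → Fin 4 → ℝ) (p : Pt) (c a b : Fin 4) : ℝ :=
  pd c (fun q => T q a b) p - ∑ d, Gamma H p d c a * T p d b
    - ∑ d, Gamma H p d c b * T p a d

/-- A Killing vector of the pp-wave metric on `U`, given by its covariant components:
a smooth covector field with `∇_{(a}X_{b)} = 0` on `U`. -/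
def IsKillingVector (H : Pt → ℝ) (U : Set Pt) (X : Pt → Fin 4 → ℝ) : Prop :=
  (∀ a, ContDiffOn ℝ (⊤ : ℕ∞) (fun p => X p a) U) ∧
  ∀ p ∈ U, ∀ a b, covD1 H X p a b + covD1 H X p b a = 0

/-- A (second order) Killing tensor of the pp-wave metric on `U`: a smooth symmetric
2-tensor field with `∇_{(c}K_{ab)} = 0` on `U`. -/
def IsKillingTensor (H : Pt → ℝ) (U : Set Pt) (K : Pt → Fin 4 → Fin 4 → ℝ) : Prop :=
  (∀ a b, ContDiffOn ℝ (⊤ : ℕ∞) (fun p => K p a b) U) ∧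
  (∀ p a b, K p a b = K p b a) ∧
  ∀ p ∈ U, ∀ a b c,
    covD2 H K p c a b + covD2 H K p a b c + covD2 H K p b c a = 0

/-- A Killing tensor is reducible if (on `U`) it is a constant-coefficient linear combination
of the metric `g_{ab}` and finitely many symmetrized products `X_{(a}Y_{b)}` of Killing
vectors `X`, `Y`. -/
def IsReducible (H : Pt → ℝ) (U : Set Pt) (K : Pt → Fin 4 → Fin 4 → ℝ) : Prop :=
  ∃ (c₀ : ℝ) (n : ℕ) (c : Fin n → ℝ) (X Y : Fin n → Pt → Fin 4 → ℝ),
    (∀ i, IsKillingVector H U (X i)) ∧ (∀ i, IsKillingVector H U (Y i)) ∧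
    ∀ p ∈ U, ∀ a b, K p a b =
      c₀ * ppMetric H p a b + ∑ i, c i * ((X i p a * Y i p b + X i p b * Y i p a) / 2)

/-!
If `X` is homothetic with factor `ψ` and `k = dΦ` is parallel, then
`∇_{(c}(k_a X_{b)}) = ψ k_{(c} g_{ab)} = ∇_{(c}(ψ Φ g_{ab)})`, so `k_{(a}X_{b)} - ψ Φ g_{ab}` is a
Killing tensor; `k = -du`, `Φ = -u`, `ψ = 1` gives `L`.

For the reducibility, diagonalise the quadratic form `a y² + 2b yz + c z²`. Along a unit eigenvector
`(s, t)` with eigenvalue `l`, every solution of the Euler equation `u² f'' + l f = 0` gives the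
Killing vector `f ε - f' (s y + t z) du` with `ε = s dy + t dz`. In the variable `log u` the
function `f / √u` solves an equation with constant coefficients, so by the Pythagorean identity for
`cos`, `sin` or `cosh`, `sinh` there are solutions with `f² + σ g² = u`, hence
`f f' + σ g g' = 1/2` and `f'² + σ g'² = l / u`. By these identities the squares of the two Killing
vectors combine to a tensor free of `f` and `g`, and its sum over the two principal axes differs
from `L` only by `-2 k_{(a}D_{b)}`, where `D` is the scaling symmetry `u ∂_u - v ∂_v`.
-/

open Set
open scoped ContDiff

lemma kd_self (i : Fin 4) : kd i i = 1 := by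
  simp [kd]

lemma kd_of_ne {i j : Fin 4} (h : i ≠ j) : kd i j = 0 := by
  simp [kd, h]

section PartialDerivatives

variable {f g : Pt → ℝ} {p : Pt} (k : Fin 4)

lemma pd_const (r : ℝ) : pd k (fun _ => r) p = 0 := by
  simp [pd]

lemma pd_coord (i : Fin 4) : pd k (fun q => q i) p = kd i k := by
  simp [pd, (hasFDerivAt_apply i p).fderiv, kd, Pi.single_apply]

lemma pd_comp {φ : ℝ → ℝ} (hφ : DifferentiableAt ℝ φ (f p)) (hf : DifferentiableAt ℝ f p) :
    pd k (fun q => φ (f q)) p = deriv φ (f p) * pd k f p := by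
  have h := hφ.hasDerivAt.comp_hasFDerivAt p hf.hasFDerivAt
  simpa only [smul_apply, smul_eq_mul] using! congr($h.fderiv (Pi.single k 1))

lemma pd_add (hf : DifferentiableAt ℝ f p) (hg : DifferentiableAt ℝ g p) :
    pd k (fun q => f q + g q) p = pd k f p + pd k g p := by
  simp [pd, fderiv_fun_add hf hg]

lemma pd_sub (hf : DifferentiableAt ℝ f p) (hg : DifferentiableAt ℝ g p) :
    pd k (fun q => f q - g q) p = pd k f p - pd k g p := by
  simp [pd, fderiv_fun_sub hf hg]

lemma pd_mul (hf : DifferentiableAt ℝ f p) (hg : DifferentiableAt ℝ g p) :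
    pd k (fun q => f q * g q) p = pd k f p * g p + f p * pd k g p := by
  simp only [pd, fderiv_fun_mul hf hg, add_apply, smul_apply, smul_eq_mul]
  ring

lemma pd_pow (n : ℕ) (hf : DifferentiableAt ℝ f p) :
    pd k (fun q => f q ^ n) p = n * f p ^ (n - 1) * pd k f p := by
  rw [pd_comp k (φ := fun x => x ^ n) (by fun_prop) hf, deriv_pow_field]

lemma pd_div (hf : DifferentiableAt ℝ f p) (hg : DifferentiableAt ℝ g p) (hp : g p ≠ 0) :
    pd k (fun q => f q / g q) p = (pd k f p * g p - f p * pd k g p) / g p ^ 2 := by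
  simp only [div_eq_mul_inv]
  rw [pd_mul k hf (hg.fun_inv hp), pd_comp k (differentiableAt_inv hp) hg, deriv_inv]
  field_simp
  ring

lemma pd_eq_of_pd_one_eq_zero (hv : pd 1 f p = 0) :
    pd k f p = pd 0 f p * kd 0 k + pd 2 f p * kd 2 k + pd 3 f p * kd 3 k := by
  fin_cases k <;> simp [kd, hv]

end PartialDerivatives

section Covariant

variable {H : Pt → ℝ} {p : Pt} (a b c : Fin 4)

lemma ppMetric_eq :
    ppMetric H p a b = -2 * H p * sd 0 0 a b - 2 * sd 0 1 a b + sd 2 2 a b + sd 3 3 a b := by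
  fin_cases a <;> fin_cases b <;> simp [ppMetric, sd, kd]

lemma sum_Gamma_mul (X : Fin 4 → ℝ) :
    ∑ d, Gamma H p d a b * X d =
      X 1 * (pd 0 H p * sd 0 0 a b + 2 * pd 2 H p * sd 0 2 a b + 2 * pd 3 H p * sd 0 3 a b) +
        (pd 2 H p * X 2 + pd 3 H p * X 3) * sd 0 0 a b := by
  rw [Fin.sum_univ_four]
  fin_cases a <;> fin_cases b <;> simp [Gamma, sd, kd] <;> ring

lemma covD2_ppMetric (hH : DifferentiableAt ℝ H p) (hv : pd 1 H p = 0) :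
    covD2 H (ppMetric H) p c a b = 0 := by
  have hg : pd c (fun q => ppMetric H q a b) p = -2 * pd c H p * sd 0 0 a b := by
    simp (disch := fun_prop) only [ppMetric_eq, pd_add, pd_sub, pd_mul, pd_const, mul_zero,
      zero_mul, zero_add, add_zero, sub_zero]
  rw [covD2, hg, pd_eq_of_pd_one_eq_zero c hv, sum_Gamma_mul, sum_Gamma_mul]
  simp (disch := decide) only [ppMetric_eq, sd, kd_self, kd_of_ne]
  ring

lemma covD2_sub {S T : Pt → Fin 4 → Fin 4 → ℝ}
    (hS : ∀ a b, DifferentiableAt ℝ (fun q => S q a b) p)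
    (hT : ∀ a b, DifferentiableAt ℝ (fun q => T q a b) p) :
    covD2 H (S - T) p c a b = covD2 H S p c a b - covD2 H T p c a b := by
  simp only [covD2, Pi.sub_apply, pd_sub c (hS a b) (hT a b), mul_sub, Finset.sum_sub_distrib]
  ring

lemma covD2_smul {φ : Pt → ℝ} {T : Pt → Fin 4 → Fin 4 → ℝ} (hφ : DifferentiableAt ℝ φ p)
    (hT : ∀ a b, DifferentiableAt ℝ (fun q => T q a b) p) :
    covD2 H (fun q => φ q • T q) p c a b = pd c φ p * T p a b + φ p * covD2 H T p c a b := by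
  simp only [covD2, Pi.smul_apply, smul_eq_mul, pd_mul c hφ (hT a b), mul_left_comm _ (φ p),
    ← Finset.mul_sum]
  ring

/-- The symmetrized product `X_{(a}Y_{b)}` of two covector fields. -/
def symProd (X Y : Pt → Fin 4 → ℝ) : Pt → Fin 4 → Fin 4 → ℝ :=
  fun p a b => (X p a * Y p b + X p b * Y p a) / 2

lemma covD2_symProd {X Y : Pt → Fin 4 → ℝ}
    (hX : ∀ a, DifferentiableAt ℝ (fun q => X q a) p)
    (hY : ∀ a, DifferentiableAt ℝ (fun q => Y q a) p) :
    covD2 H (symProd X Y) p c a b =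
      (covD1 H X p c a * Y p b + X p a * covD1 H Y p c b +
        (covD1 H X p c b * Y p a + X p b * covD1 H Y p c a)) / 2 := by
  have hpd : pd c (fun q => symProd X Y q a b) p =
      (pd c (fun q => X q a) p * Y p b + X p a * pd c (fun q => Y q b) p +
        (pd c (fun q => X q b) p * Y p a + X p b * pd c (fun q => Y q a) p)) / 2 := by
    simp (disch := fun_prop) only [symProd, div_eq_mul_inv, pd_add, pd_mul, pd_const]
    ring
  rw [covD2, hpd]
  simp only [covD1, sum_Gamma_mul, symProd]
  ring

end Covariant

section Koutras

variable {H : Pt → ℝ} {U : Set Pt}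

/-- `X` is a smooth homothetic covector field on `U` with constant factor `ψ`:
`∇_{(a}X_{b)} = ψ g_{ab}`. -/
def IsHomothetic (H : Pt → ℝ) (U : Set Pt) (ψ : ℝ) (X : Pt → Fin 4 → ℝ) : Prop :=
  (∀ a, ContDiffOn ℝ ∞ (fun p => X p a) U) ∧
    ∀ p ∈ U, ∀ a b, covD1 H X p a b + covD1 H X p b a = 2 * (ψ * ppMetric H p a b)

lemma differentiableAt_of_contDiffOn {f : Pt → ℝ} (hU : IsOpen U) (hf : ContDiffOn ℝ ∞ f U)
    {p : Pt} (hp : p ∈ U) : DifferentiableAt ℝ f p :=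
  (hf.differentiableOn (by simp)).differentiableAt (hU.mem_nhds hp)

lemma contDiffOn_ppMetric (hH : ContDiffOn ℝ ∞ H U) (a b : Fin 4) :
    ContDiffOn ℝ ∞ (fun p => ppMetric H p a b) U := by
  simp only [ppMetric_eq]
  fun_prop

lemma contDiffOn_symProd {X Y : Pt → Fin 4 → ℝ} (hX : ∀ a, ContDiffOn ℝ ∞ (fun p => X p a) U)
    (hY : ∀ a, ContDiffOn ℝ ∞ (fun p => Y p a) U) (a b : Fin 4) :
    ContDiffOn ℝ ∞ (fun p => symProd X Y p a b) U := by
  unfold symProd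
  fun_prop

lemma symProd_comm (X Y : Pt → Fin 4 → ℝ) (p : Pt) (a b : Fin 4) :
    symProd X Y p a b = symProd X Y p b a := by
  rw [symProd, symProd, add_comm]

lemma ppMetric_comm (p : Pt) (a b : Fin 4) : ppMetric H p a b = ppMetric H p b a := by
  simp only [ppMetric_eq, sd]
  ring

/-- The Koutras tensor `k_{(a}X_{b)} - ψ Φ g_{ab}` built from a homothetic field `X` with factor `ψ`
and a parallel covector field `k = dΦ`. -/
def koutrasTensor (H : Pt → ℝ) (k : Pt → Fin 4 → ℝ) (Φ : Pt → ℝ) (ψ : ℝ) (X : Pt → Fin 4 → ℝ) :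
    Pt → Fin 4 → Fin 4 → ℝ :=
  symProd k X - fun p => (ψ * Φ p) • ppMetric H p

lemma covD2_koutrasTensor {k X : Pt → Fin 4 → ℝ} {Φ : Pt → ℝ} {p : Pt} (ψ : ℝ) (a b c : Fin 4)
    (hH : DifferentiableAt ℝ H p) (hv : pd 1 H p = 0)
    (hkd : ∀ a, DifferentiableAt ℝ (fun q => k q a) p) (hk : ∀ a b, covD1 H k p a b = 0)
    (hΦ : DifferentiableAt ℝ Φ p) (hkΦ : ∀ a, pd a Φ p = k p a)
    (hX : ∀ a, DifferentiableAt ℝ (fun q => X q a) p) :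
    covD2 H (koutrasTensor H k Φ ψ X) p c a b =
      (k p a * covD1 H X p c b + k p b * covD1 H X p c a) / 2 - ψ * k p c * ppMetric H p a b := by
  have hψΦ : DifferentiableAt ℝ (fun q => ψ * Φ q) p := by fun_prop
  have hg (a b) : DifferentiableAt ℝ (fun q => ppMetric H q a b) p := by
    simp only [ppMetric_eq]
    fun_prop
  have hkX (a b) : DifferentiableAt ℝ (fun q => symProd k X q a b) p := by
    unfold symProd
    fun_prop
  have hψg (a b) : DifferentiableAt ℝ (fun q => ((ψ * Φ q) • ppMetric H q) a b) p :=
    hψΦ.mul (hg a b)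
  rw [koutrasTensor, covD2_sub a b c hkX hψg, covD2_smul a b c hψΦ hg, covD2_symProd a b c hkd hX,
    covD2_ppMetric a b c hH hv, pd_mul c (by fun_prop) hΦ, pd_const, hk, hk, hkΦ]
  ring

theorem IsHomothetic.isKillingTensor_koutrasTensor {k X : Pt → Fin 4 → ℝ} {Φ : Pt → ℝ} {ψ : ℝ}
    (hX : IsHomothetic H U ψ X) (hU : IsOpen U) (hH : ContDiffOn ℝ ∞ H U)
    (hv : ∀ p ∈ U, pd 1 H p = 0) (hks : ∀ a, ContDiffOn ℝ ∞ (fun p => k p a) U)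
    (hk : ∀ p ∈ U, ∀ a b, covD1 H k p a b = 0) (hΦ : ContDiffOn ℝ ∞ Φ U)
    (hkΦ : ∀ p ∈ U, ∀ a, pd a Φ p = k p a) :
    IsKillingTensor H U (koutrasTensor H k Φ ψ X) := by
  obtain ⟨hXs, hXh⟩ := hX
  refine ⟨fun a b => (contDiffOn_symProd hks hXs a b).sub
    ((contDiffOn_const.mul hΦ).mul (contDiffOn_ppMetric hH a b)), fun p a b => ?_,
    fun p hp a b c => ?_⟩
  · simp only [koutrasTensor, Pi.sub_apply, Pi.smul_apply, symProd_comm k X p a b,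
      ppMetric_comm p a b]
  have diff {f : Pt → ℝ} (hf : ContDiffOn ℝ ∞ f U) : DifferentiableAt ℝ f p :=
    differentiableAt_of_contDiffOn hU hf hp
  have hcov (a b c : Fin 4) := covD2_koutrasTensor ψ a b c (diff hH) (hv p hp)
    (fun i => diff (hks i)) (hk p hp) (diff hΦ) (hkΦ p hp) (fun i => diff (hXs i))
  rw [hcov, hcov, hcov]
  linear_combination (k p a * hXh p hp b c + k p b * hXh p hp c a + k p c * hXh p hp a b) / 2

end Koutras

section PpWave

variable {H : Pt → ℝ} {U : Set Pt}

/-- The parallel null covector field `k = -du`. -/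
def waveCovector : Pt → Fin 4 → ℝ := fun _ a => -kd 0 a

lemma covD1_waveCovector (p : Pt) (a b : Fin 4) : covD1 H waveCovector p a b = 0 := by
  simp (disch := decide) [covD1, sum_Gamma_mul, waveCovector, pd_const, kd_of_ne]

lemma pd_neg_coord_zero (p : Pt) (a : Fin 4) : pd a (fun q => -q 0) p = waveCovector p a := by
  rw [pd, fderiv_fun_neg, neg_apply]
  exact congr(-$(pd_coord a 0))

lemma contDiffOn_waveCovector (a : Fin 4) : ContDiffOn ℝ ∞ (fun p => waveCovector p a) U :=
  contDiffOn_const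

lemma isKillingVector_waveCovector : IsKillingVector H U waveCovector :=
  ⟨contDiffOn_waveCovector, fun p _ a b => by simp only [covD1_waveCovector, add_zero]⟩

/-- The covector field of `2v ∂_v + y ∂_y + z ∂_z`. -/
def dilation : Pt → Fin 4 → ℝ :=
  fun p a => -2 * p 1 * kd 0 a + p 2 * kd 2 a + p 3 * kd 3 a

lemma isHomothetic_dilation
    (hH : ∀ p ∈ U, p 2 * pd 2 H p + p 3 * pd 3 H p = 2 * H p) :
    IsHomothetic H U 1 dilation := by
  refine ⟨fun a => by unfold dilation; fun_prop, fun p hp a b => ?_⟩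
  have hpd (a b : Fin 4) : pd a (fun q => dilation q b) p =
      -2 * kd 1 a * kd 0 b + kd 2 a * kd 2 b + kd 3 a * kd 3 b := by
    simp (disch := fun_prop) only [dilation, pd_add, pd_mul, pd_const, pd_coord]
    ring
  simp only [covD1, hpd, sum_Gamma_mul]
  simp (disch := decide) only [dilation, ppMetric_eq, sd, kd_self, kd_of_ne]
  linear_combination (-2 * kd 0 a * kd 0 b) * hH p hp

/-- The covector field of `u ∂_u - v ∂_v`. -/
def scaling (H : Pt → ℝ) : Pt → Fin 4 → ℝ :=
  fun p a => (p 1 - 2 * (p 0 * H p)) * kd 0 a - p 0 * kd 1 a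

lemma isKillingVector_scaling (hU : IsOpen U) (hHs : ContDiffOn ℝ ∞ H U)
    (hv : ∀ p ∈ U, pd 1 H p = 0) (hH : ∀ p ∈ U, p 0 * pd 0 H p = -2 * H p) :
    IsKillingVector H U (scaling H) := by
  refine ⟨fun a => by unfold scaling; fun_prop, fun p hp a b => ?_⟩
  have hHd : DifferentiableAt ℝ H p := differentiableAt_of_contDiffOn hU hHs hp
  have hpd (a b : Fin 4) : pd a (fun q => scaling H q b) p =
      (kd 1 a - 2 * (kd 0 a * H p + p 0 * pd a H p)) * kd 0 b - kd 0 a * kd 1 b := by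
    simp (disch := fun_prop) only [scaling, pd_sub, pd_mul, pd_const, pd_coord]
    ring
  rw [covD1, covD1, hpd, hpd, pd_eq_of_pd_one_eq_zero a (hv p hp),
    pd_eq_of_pd_one_eq_zero b (hv p hp), sum_Gamma_mul, sum_Gamma_mul]
  simp (disch := decide) only [scaling, sd, kd_self, kd_of_ne]
  linear_combination (-2 * kd 0 a * kd 0 b) * hH p hp

/-- The covector field `f(u) ε - f'(u) (s y + t z) du` with `ε = s dy + t dz`. -/
def transverse (f : ℝ → ℝ) (s t : ℝ) : Pt → Fin 4 → ℝ :=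
  fun p a => f (p 0) * (s * kd 2 a + t * kd 3 a) - deriv f (p 0) * (s * p 2 + t * p 3) * kd 0 a

lemma isKillingVector_transverse_of_deriv_deriv {f : ℝ → ℝ} {s t : ℝ} {I : Set ℝ} (hI : IsOpen I)
    (hU : MapsTo (fun p : Pt => p 0) U I) (hf : ContDiffOn ℝ ∞ f I)
    (hH : ∀ p ∈ U, deriv (deriv f) (p 0) * (s * p 2 + t * p 3) =
      -f (p 0) * (s * pd 2 H p + t * pd 3 H p)) :
    IsKillingVector H U (transverse f s t) := by
  have hf' : ContDiffOn ℝ ∞ (deriv f) I := hf.deriv_of_isOpen hI (by simp)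
  have hcoord : ContDiffOn ℝ ∞ (fun p : Pt => p 0) U := by fun_prop
  refine ⟨fun a => ?_, fun p hp a b => ?_⟩
  · have h1 := hf.comp hcoord hU
    have h2 := hf'.comp hcoord hU
    exact (h1.mul contDiffOn_const).sub ((h2.mul (by fun_prop)).mul contDiffOn_const)
  have hfd : DifferentiableAt ℝ f (p 0) :=
    (hf.differentiableOn (by simp)).differentiableAt (hI.mem_nhds (hU hp))
  have hfd' : DifferentiableAt ℝ (deriv f) (p 0) :=
    (hf'.differentiableOn (by simp)).differentiableAt (hI.mem_nhds (hU hp))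
  have hpd (a b : Fin 4) : pd a (fun q => transverse f s t q b) p =
      deriv f (p 0) * kd 0 a * (s * kd 2 b + t * kd 3 b) -
        (deriv (deriv f) (p 0) * kd 0 a * (s * p 2 + t * p 3) +
          deriv f (p 0) * (s * kd 2 a + t * kd 3 a)) * kd 0 b := by
    have h1 := pd_comp a hfd (f := fun q => q 0) (by fun_prop)
    have h2 := pd_comp a hfd' (f := fun q => q 0) (by fun_prop)
    simp (disch := fun_prop) only [transverse, pd_add, pd_sub, pd_mul, pd_const, pd_coord, h1, h2]
    ring
  simp only [covD1, hpd, sum_Gamma_mul]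
  simp (disch := decide) only [transverse, sd, kd_self, kd_of_ne]
  linear_combination (-2 * kd 0 a * kd 0 b) * hH p hp

end PpWave

section Reducible

variable {H : Pt → ℝ} {U : Set Pt} {K L : Pt → Fin 4 → Fin 4 → ℝ}

lemma IsKillingVector.isReducible_symProd {X Y : Pt → Fin 4 → ℝ} (hX : IsKillingVector H U X)
    (hY : IsKillingVector H U Y) : IsReducible H U (symProd X Y) :=
  ⟨0, 1, fun _ => 1, fun _ => X, fun _ => Y, fun _ => hX, fun _ => hY, by simp [symProd]⟩

lemma IsReducible.congr (hK : IsReducible H U K) (h : ∀ p ∈ U, ∀ a b, L p a b = K p a b) :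
    IsReducible H U L := by
  obtain ⟨c₀, n, c, X, Y, hX, hY, hsum⟩ := hK
  exact ⟨c₀, n, c, X, Y, hX, hY, fun p hp a b => (h p hp a b).trans (hsum p hp a b)⟩

lemma IsReducible.const_smul (hK : IsReducible H U K) (r : ℝ) : IsReducible H U (r • K) := by
  obtain ⟨c₀, n, c, X, Y, hX, hY, hsum⟩ := hK
  refine ⟨r * c₀, n, fun i => r * c i, X, Y, hX, hY, fun p hp a b => ?_⟩
  simp only [Pi.smul_apply, smul_eq_mul, hsum p hp, mul_add, Finset.mul_sum, mul_assoc]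

lemma IsReducible.add (hK : IsReducible H U K) (hL : IsReducible H U L) :
    IsReducible H U (K + L) := by
  obtain ⟨c₀, m, c, X, Y, hX, hY, hsum⟩ := hK
  obtain ⟨d₀, n, d, X', Y', hX', hY', hsum'⟩ := hL
  refine ⟨c₀ + d₀, m + n, Fin.append c d, Fin.append X X', Fin.append Y Y',
    Fin.addCases (by simpa) (by simpa), Fin.addCases (by simpa) (by simpa), fun p hp a b => ?_⟩
  simp only [Pi.add_apply, hsum p hp, hsum' p hp, Fin.sum_univ_add, Fin.append_left,
    Fin.append_right]
  ring

end Reducible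

section Euler

/-- `f` is a smooth solution on the half-line `u > 0` of the Euler equation `u² f'' + l f = 0`. -/
structure IsEulerSolution (l : ℝ) (f : ℝ → ℝ) : Prop where
  contDiffOn : ContDiffOn ℝ ∞ f (Ioi 0)
  deriv_deriv : ∀ u > 0, deriv (deriv f) u = -l * f u / u ^ 2

lemma hasDerivAt_rpow_mul_comp_log {φ : ℝ → ℝ} {r u : ℝ} (hu : 0 < u)
    (hφ : DifferentiableAt ℝ φ (Real.log u)) :
    HasDerivAt (fun x => x ^ r * φ (Real.log x))
      (u ^ (r - 1) * (r * φ (Real.log u) + deriv φ (Real.log u))) u := by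
  have h := (Real.hasDerivAt_rpow_const (p := r) (.inl hu.ne')).mul
    (hφ.hasDerivAt.comp u (Real.hasDerivAt_log hu.ne'))
  refine h.congr_deriv ?_
  simp only [Function.comp_apply]
  rw [Real.rpow_sub_one hu.ne']
  field_simp

lemma isEulerSolution_rpow_half_mul_comp_log {φ : ℝ → ℝ} {μ : ℝ} (hφ : ContDiff ℝ ∞ φ)
    (hφ2 : ∀ x, deriv (deriv φ) x = -μ * φ x) :
    IsEulerSolution (1 / 4 + μ) fun u => u ^ (1 / 2 : ℝ) * φ (Real.log u) := by
  have hφ' : ContDiff ℝ ∞ (deriv φ) := (contDiff_infty_iff_deriv.1 hφ).2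
  have hφd : Differentiable ℝ φ := hφ.differentiable (by simp)
  have hφd' : Differentiable ℝ (deriv φ) := hφ'.differentiable (by simp)
  have hderiv : EqOn (deriv fun u => u ^ (1 / 2 : ℝ) * φ (Real.log u))
      (fun u => u ^ (1 / 2 - 1 : ℝ) * (1 / 2 * φ (Real.log u) + deriv φ (Real.log u))) (Ioi 0) :=
    fun u hu => (hasDerivAt_rpow_mul_comp_log hu (hφd _)).deriv
  refine ⟨?_, fun u hu => ?_⟩
  · have hpow : ContDiffOn ℝ ∞ (fun u : ℝ => u ^ (1 / 2 : ℝ)) (Ioi 0) := fun u hu =>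
      (Real.contDiffAt_rpow_const_of_ne (ne_of_gt hu)).contDiffWithinAt
    have hlog : ContDiffOn ℝ ∞ Real.log (Ioi 0) :=
      Real.contDiffOn_log.mono fun u hu => ne_of_gt hu
    exact hpow.mul (hφ.comp_contDiffOn hlog)
  rw [hderiv.deriv isOpen_Ioi hu, (hasDerivAt_rpow_mul_comp_log
    (φ := fun x => 1 / 2 * φ x + deriv φ x) hu (by fun_prop)).deriv, deriv_fun_add (by fun_prop)
    (by fun_prop), deriv_const_mul _ (hφd _), hφ2, Real.rpow_sub_one hu.ne',
    Real.rpow_sub_one hu.ne']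
  field_simp
  ring

lemma exists_deriv_deriv_eq_neg_mul_sq_add_sq_eq_one (μ : ℝ) : ∃ (σ : ℝ) (C S : ℝ → ℝ),
    (ContDiff ℝ ∞ C ∧ ∀ x, deriv (deriv C) x = -μ * C x) ∧
    (ContDiff ℝ ∞ S ∧ ∀ x, deriv (deriv S) x = -μ * S x) ∧
    ∀ x, C x ^ 2 + σ * S x ^ 2 = 1 := by
  have hcomp (φ : ℝ → ℝ) (w x : ℝ) :
      deriv (deriv fun x => φ (w * x)) x = w ^ 2 * deriv (deriv φ) (w * x) := by
    have hderiv : deriv (fun x => φ (w * x)) = fun x => w * deriv φ (w * x) :=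
      funext fun x => deriv_comp_mul_left w φ x
    rw [hderiv, deriv_const_mul_field, deriv_comp_mul_left w (deriv φ), smul_eq_mul]
    ring
  rcases le_total μ 0 with hμ | hμ
  · obtain ⟨w, hw⟩ : ∃ w : ℝ, w ^ 2 = -μ := ⟨√(-μ), Real.sq_sqrt (by linarith)⟩
    refine ⟨-1, fun x => Real.cosh (w * x), fun x => Real.sinh (w * x),
      ⟨by fun_prop, fun x => ?_⟩, ⟨by fun_prop, fun x => ?_⟩,
      fun x => by linear_combination Real.cosh_sq_sub_sinh_sq (w * x)⟩
    · rw [hcomp, hw]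
      simp
    · rw [hcomp, hw]
      simp
  · obtain ⟨w, hw⟩ : ∃ w : ℝ, w ^ 2 = μ := ⟨√μ, Real.sq_sqrt hμ⟩
    refine ⟨1, fun x => Real.cos (w * x), fun x => Real.sin (w * x),
      ⟨by fun_prop, fun x => ?_⟩, ⟨by fun_prop, fun x => ?_⟩,
      fun x => by linear_combination Real.cos_sq_add_sin_sq (w * x)⟩
    · rw [hcomp, hw]
      simp
    · rw [hcomp, hw]
      simp

lemma exists_isEulerSolution_sq_add_sq (l : ℝ) : ∃ (σ : ℝ) (f g : ℝ → ℝ),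
    IsEulerSolution l f ∧ IsEulerSolution l g ∧ ∀ u > 0, f u ^ 2 + σ * g u ^ 2 = u := by
  obtain ⟨σ, C, S, ⟨hC, hC2⟩, ⟨hS, hS2⟩, hCS⟩ :=
    exists_deriv_deriv_eq_neg_mul_sq_add_sq_eq_one (l - 1 / 4)
  have hf := isEulerSolution_rpow_half_mul_comp_log hC hC2
  have hg := isEulerSolution_rpow_half_mul_comp_log hS hS2
  rw [add_sub_cancel] at hf hg
  refine ⟨σ, _, _, hf, hg, fun u hu => ?_⟩
  have hsq : (u ^ (1 / 2 : ℝ)) ^ 2 = u := by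
    rw [← Real.sqrt_eq_rpow, Real.sq_sqrt hu.le]
  linear_combination (C (Real.log u) ^ 2 + σ * S (Real.log u) ^ 2) * hsq + u * hCS (Real.log u)

variable {f g : ℝ → ℝ} {l σ : ℝ}

lemma IsEulerSolution.differentiableAt (hf : IsEulerSolution l f) {u : ℝ} (hu : 0 < u) :
    DifferentiableAt ℝ f u :=
  (hf.contDiffOn.differentiableOn (by simp)).differentiableAt (Ioi_mem_nhds hu)

lemma IsEulerSolution.hasDerivAt_deriv (hf : IsEulerSolution l f) {u : ℝ} (hu : 0 < u) :
    HasDerivAt (deriv f) (-l * f u / u ^ 2) u := by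
  have hf' : ContDiffOn ℝ ∞ (deriv f) (Ioi 0) := hf.contDiffOn.deriv_of_isOpen isOpen_Ioi (by simp)
  rw [← hf.deriv_deriv u hu]
  exact ((hf'.differentiableOn (by simp)).differentiableAt (Ioi_mem_nhds hu)).hasDerivAt

lemma mul_deriv_add_mul_deriv_of_sq_add_sq (h : ∀ u > 0, f u ^ 2 + σ * g u ^ 2 = u) {u : ℝ}
    (hu : 0 < u) (hf : DifferentiableAt ℝ f u) (hg : DifferentiableAt ℝ g u) :
    f u * deriv f u + σ * (g u * deriv g u) = 1 / 2 := by
  have hd := (hf.hasDerivAt.pow 2).add ((hg.hasDerivAt.pow 2).const_mul σ)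
  have hid : (fun x => f x ^ 2 + σ * g x ^ 2) =ᶠ[nhds u] id :=
    Filter.eventuallyEq_of_mem (Ioi_mem_nhds hu) h
  have huniq := hd.unique ((hasDerivAt_id u).congr_of_eventuallyEq hid)
  linear_combination huniq / 2

lemma IsEulerSolution.deriv_sq_add_deriv_sq (hf : IsEulerSolution l f)
    (hg : IsEulerSolution l g) (h : ∀ u > 0, f u ^ 2 + σ * g u ^ 2 = u) {u : ℝ} (hu : 0 < u) :
    deriv f u ^ 2 + σ * deriv g u ^ 2 = l / u := by
  have hd := ((hf.differentiableAt hu).hasDerivAt.mul (hf.hasDerivAt_deriv hu)).add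
    (((hg.differentiableAt hu).hasDerivAt.mul (hg.hasDerivAt_deriv hu)).const_mul σ)
  have hconst : (fun x => f x * deriv f x + σ * (g x * deriv g x)) =ᶠ[nhds u] fun _ => 1 / 2 :=
    Filter.eventuallyEq_of_mem (Ioi_mem_nhds hu) fun x hx =>
      mul_deriv_add_mul_deriv_of_sq_add_sq h hx (hf.differentiableAt hx) (hg.differentiableAt hx)
  have huniq := hd.unique ((hasDerivAt_const u (1 / 2 : ℝ)).congr_of_eventuallyEq hconst)
  have hlu : l / u = l * (f u ^ 2 + σ * g u ^ 2) / u ^ 2 := by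
    rw [h u hu]
    field_simp
  rw [hlu]
  linear_combination huniq

end Euler

section ScaleInvariantWave

lemma exists_unit_eigenvector (a b c : ℝ) :
    ∃ s t l : ℝ, s ^ 2 + t ^ 2 = 1 ∧ a * s + b * t = l * s ∧ b * s + c * t = l * t := by
  have hA : (!![a, b; b, c]).IsHermitian := by
    ext i j
    fin_cases i <;> fin_cases j <;> rfl
  have hv := hA.mulVec_eigenvectorBasis 0
  have hnorm := EuclideanSpace.real_norm_sq_eq (hA.eigenvectorBasis 0)
  refine ⟨hA.eigenvectorBasis 0 0, hA.eigenvectorBasis 0 1, hA.eigenvalues 0, ?_, ?_, ?_⟩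
  · simpa [Fin.sum_univ_two] using hnorm.symm
  · simpa [Matrix.mulVec, dotProduct] using congr($hv 0)
  · simpa [Matrix.mulVec, dotProduct] using congr($hv 1)

variable {a b c : ℝ}

/-- The profile `H` of the singular scale-invariant plane wave `2H = u⁻²(a y² + 2b yz + c z²)`. -/
def scaleInvariantProfile (a b c : ℝ) : Pt → ℝ :=
  fun p => (a * (p 2) ^ 2 + 2 * b * (p 2) * (p 3) + c * (p 3) ^ 2) / (2 * (p 0) ^ 2)

lemma isOpen_setOf_coord_pos (i : Fin 4) : IsOpen {p : Pt | 0 < p i} :=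
  isOpen_lt continuous_const (continuous_apply i)

lemma contDiffOn_scaleInvariantProfile :
    ContDiffOn ℝ ∞ (scaleInvariantProfile a b c) {p | 0 < p 0} := by
  unfold scaleInvariantProfile
  exact ContDiffOn.div (by fun_prop) (by fun_prop) fun p (hp : 0 < p 0) => by positivity

lemma pd_scaleInvariantProfile (k : Fin 4) {p : Pt} (hp : 0 < p 0) :
    pd k (scaleInvariantProfile a b c) p =
      -2 * scaleInvariantProfile a b c p / p 0 * kd 0 k +
        (a * p 2 + b * p 3) / p 0 ^ 2 * kd 2 k + (b * p 2 + c * p 3) / p 0 ^ 2 * kd 3 k := by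
  unfold scaleInvariantProfile
  rw [pd_div k (by fun_prop) (by fun_prop) (by positivity)]
  simp (disch := fun_prop) only [pd_add, pd_mul, pd_pow, pd_const, pd_coord]
  field_simp
  ring

lemma pd_one_scaleInvariantProfile {p : Pt} (hp : 0 < p 0) :
    pd 1 (scaleInvariantProfile a b c) p = 0 := by
  simp [pd_scaleInvariantProfile 1 hp, kd]

lemma mul_pd_zero_scaleInvariantProfile {p : Pt} (hp : 0 < p 0) :
    p 0 * pd 0 (scaleInvariantProfile a b c) p = -2 * scaleInvariantProfile a b c p := by
  simp (disch := decide) only [pd_scaleInvariantProfile 0 hp, kd_self, kd_of_ne]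
  field_simp
  ring

lemma mul_pd_add_mul_pd_scaleInvariantProfile {p : Pt} (hp : 0 < p 0) :
    p 2 * pd 2 (scaleInvariantProfile a b c) p + p 3 * pd 3 (scaleInvariantProfile a b c) p =
      2 * scaleInvariantProfile a b c p := by
  simp (disch := decide) only [pd_scaleInvariantProfile _ hp, kd_self, kd_of_ne]
  unfold scaleInvariantProfile
  field_simp
  ring

/-- The transverse tensor `u ε_a ε_b - (s y + t z) δ^u_{(a}ε_{b)} + l u⁻¹ (s y + t z)² δ^u_a δ^u_b`
with `ε = s dy + t dz`. -/
def transverseTensor (l s t : ℝ) : Pt → Fin 4 → Fin 4 → ℝ :=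
  fun p i j =>
    p 0 * (s * kd 2 i + t * kd 3 i) * (s * kd 2 j + t * kd 3 j) -
      (s * p 2 + t * p 3) *
        (kd 0 i * (s * kd 2 j + t * kd 3 j) + kd 0 j * (s * kd 2 i + t * kd 3 i)) / 2 +
      l / p 0 * (s * p 2 + t * p 3) ^ 2 * kd 0 i * kd 0 j

lemma transverseTensor_eq_symProd_add {f g : ℝ → ℝ} {l σ : ℝ} (hf : IsEulerSolution l f)
    (hg : IsEulerSolution l g) (h : ∀ u > 0, f u ^ 2 + σ * g u ^ 2 = u) (s t : ℝ) {p : Pt}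
    (hp : 0 < p 0) (i j : Fin 4) :
    transverseTensor l s t p i j =
      (symProd (transverse f s t) (transverse f s t) +
        σ • symProd (transverse g s t) (transverse g s t)) p i j := by
  simp only [transverseTensor, Pi.add_apply, Pi.smul_apply, smul_eq_mul, symProd, transverse]
  linear_combination
    -(s * kd 2 i + t * kd 3 i) * (s * kd 2 j + t * kd 3 j) * h (p 0) hp +
    (s * p 2 + t * p 3) *
      (kd 0 i * (s * kd 2 j + t * kd 3 j) + kd 0 j * (s * kd 2 i + t * kd 3 i)) *
      mul_deriv_add_mul_deriv_of_sq_add_sq h hp (hf.differentiableAt hp) (hg.differentiableAt hp) -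
    (s * p 2 + t * p 3) ^ 2 * kd 0 i * kd 0 j * hf.deriv_sq_add_deriv_sq hg h hp

lemma IsEulerSolution.isKillingVector_transverse {f : ℝ → ℝ} {l s t : ℝ}
    (hf : IsEulerSolution l f) (hs : a * s + b * t = l * s) (ht : b * s + c * t = l * t) :
    IsKillingVector (scaleInvariantProfile a b c) {p | 0 < p 0} (transverse f s t) := by
  refine isKillingVector_transverse_of_deriv_deriv isOpen_Ioi (fun p hp => hp) hf.contDiffOn
    fun p hp => ?_
  simp (disch := decide) only [hf.deriv_deriv _ hp, pd_scaleInvariantProfile _ hp, kd_self,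
    kd_of_ne]
  linear_combination f (p 0) / p 0 ^ 2 * (p 2 * hs + p 3 * ht)

lemma isReducible_transverseTensor {l s t : ℝ} (hs : a * s + b * t = l * s)
    (ht : b * s + c * t = l * t) :
    IsReducible (scaleInvariantProfile a b c) {p | 0 < p 0} (transverseTensor l s t) := by
  obtain ⟨σ, f, g, hf, hg, h⟩ := exists_isEulerSolution_sq_add_sq l
  have hF := hf.isKillingVector_transverse hs ht
  have hG := hg.isKillingVector_transverse hs ht
  exact ((hF.isReducible_symProd hF).add ((hG.isReducible_symProd hG).const_smul σ)).congr
    fun p hp => transverseTensor_eq_symProd_add hf hg h s t hp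

/-- The Koutras tensor of the homothety `dilation` and the parallel field `waveCovector = d(-u)`. -/
abbrev dilationKoutrasTensor (H : Pt → ℝ) : Pt → Fin 4 → Fin 4 → ℝ :=
  koutrasTensor H waveCovector (fun p => -p 0) 1 dilation

lemma dilationKoutrasTensor_eq_add {l m s t : ℝ} {p : Pt} (hp : 0 < p 0) (hst : s ^ 2 + t ^ 2 = 1)
    (hlm : a * p 2 ^ 2 + 2 * b * p 2 * p 3 + c * p 3 ^ 2 =
      l * (s * p 2 + t * p 3) ^ 2 + m * (-t * p 2 + s * p 3) ^ 2) (i j : Fin 4) :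
    dilationKoutrasTensor (scaleInvariantProfile a b c) p i j =
      ((-2 : ℝ) • symProd waveCovector (scaling (scaleInvariantProfile a b c)) +
        (transverseTensor l s t + transverseTensor m (-t) s)) p i j := by
  have hH : 2 * p 0 * scaleInvariantProfile a b c p =
      l / p 0 * (s * p 2 + t * p 3) ^ 2 + m / p 0 * (-t * p 2 + s * p 3) ^ 2 := by
    rw [scaleInvariantProfile, hlm]
    field_simp
  simp only [koutrasTensor, symProd, waveCovector, dilation, scaling, transverseTensor,
    Pi.add_apply, Pi.sub_apply, Pi.smul_apply, smul_eq_mul, ppMetric_eq, sd]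
  linear_combination kd 0 i * kd 0 j * hH +
    (((p 2 * kd 2 j + p 3 * kd 3 j) * kd 0 i + (p 2 * kd 2 i + p 3 * kd 3 i) * kd 0 j) / 2 -
      p 0 * (kd 2 i * kd 2 j + kd 3 i * kd 3 j)) * hst

theorem isReducible_dilationKoutrasTensor :
    IsReducible (scaleInvariantProfile a b c) {p | 0 < p 0}
      (dilationKoutrasTensor (scaleInvariantProfile a b c)) := by
  obtain ⟨s, t, l, hst, hs, ht⟩ := exists_unit_eigenvector a b c
  have hs' : a * -t + b * s = (a + c - l) * -t := by linear_combination ht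
  have ht' : b * -t + c * s = (a + c - l) * s := by linear_combination -hs
  have hlm (y z : ℝ) : a * y ^ 2 + 2 * b * y * z + c * z ^ 2 =
      l * (s * y + t * z) ^ 2 + (a + c - l) * (-t * y + s * z) ^ 2 := by
    linear_combination y ^ 2 * (s * hs - t * hs') + 2 * y * z * (t * hs + s * hs') +
      z ^ 2 * (t * ht + s * ht') - (a * y ^ 2 + 2 * b * y * z + c * z ^ 2) * hst
  have hD : IsKillingVector (scaleInvariantProfile a b c) {p | 0 < p 0}
      (scaling (scaleInvariantProfile a b c)) :=
    isKillingVector_scaling (isOpen_setOf_coord_pos 0) contDiffOn_scaleInvariantProfile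
      (fun p hp => pd_one_scaleInvariantProfile hp) fun p hp => mul_pd_zero_scaleInvariantProfile hp
  exact (((isKillingVector_waveCovector.isReducible_symProd hD).const_smul (-2)).add
    ((isReducible_transverseTensor hs ht).add (isReducible_transverseTensor hs' ht'))).congr
    fun p hp => dilationKoutrasTensor_eq_add hp hst (hlm _ _)

end ScaleInvariantWave

/-- For the singular scale-invariant plane wave
`2H = u⁻²(a y² + 2b yz + c z²)` on `{u > 0}` (with `a,b,c` not all zero), the vector field
`X₆` with covariant components `-2v δ^u_a + y δ^y_a + z δ^z_a` is homothetic with `ψ = 1`,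
and the Koutras Killing tensor `L_{ab} = k_{(a}(X₆)_{b)} + u g_{ab}` is reducible. -/
theorem stmt1 (a b c : ℝ) (habc : ¬(a = 0 ∧ b = 0 ∧ c = 0)) :
    let U : Set Pt := {p | 0 < p 0}
    let H : Pt → ℝ := fun p =>
      (a * (p 2) ^ 2 + 2 * b * (p 2) * (p 3) + c * (p 3) ^ 2) / (2 * (p 0) ^ 2)
    let X₆ : Pt → Fin 4 → ℝ := fun p i =>
      -2 * p 1 * kd 0 i + p 2 * kd 2 i + p 3 * kd 3 i
    let L : Pt → Fin 4 → Fin 4 → ℝ := fun p i j =>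
      ((-kd 0 i) * X₆ p j + (-kd 0 j) * X₆ p i) / 2 + p 0 * ppMetric H p i j
    (∀ p ∈ U, ∀ i j,
        covD1 H X₆ p i j + covD1 H X₆ p j i = 2 * (1 * ppMetric H p i j)) ∧
    IsKillingTensor H U L ∧ IsReducible H U L := by
  intro U H X₆ L
  have hX₆ : IsHomothetic H U 1 X₆ :=
    isHomothetic_dilation fun p hp => mul_pd_add_mul_pd_scaleInvariantProfile hp
  have hL : L = dilationKoutrasTensor H := by
    ext p i j
    simp [L, X₆, koutrasTensor, symProd, waveCovector, dilation]
  rw [hL]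
  exact ⟨hX₆.2, hX₆.isKillingTensor_koutrasTensor (isOpen_setOf_coord_pos 0)
    contDiffOn_scaleInvariantProfile (fun p hp => pd_one_scaleInvariantProfile hp)
    contDiffOn_waveCovector (fun p _ => covD1_waveCovector p) (by fun_prop)
    fun p _ => pd_neg_coord_zero p, isReducible_dilationKoutrasTensor⟩

end
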